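/- For every ε > 0, the logarithmic derivative of zeta satisfies −1/ε + 1/(2(1+ε)²) < ζ'(1+ε)/ζ(1+ε) < −1/ε + 2 − 1/(1+ε). -/

import Mathlib

/-!
Write `R s = ζ s - 1 / (s - 1)` (Mathlib's `riemannZeta₀`). With `s = 1 + ε`, both bounds follow by
elementary algebra from the four estimates
`1 / 2 ≤ R s ≤ 1` and `-1 / (2 s) ≤ R' s ≤ 1 / s`, valid for real `s > 1`.

These come from `R s = 1 - s * T s`, where `T s = ∫_1^∞ {x} x ^ (-s - 1) dx` is Mathlib's
`ZetaAsymptotics.termTSum`, split into integrals over the intervals `[n, n + 1]`.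
Since `x ^ (-s - 1)` is decreasing, replacing `{x}` by its mean `1 / 2` increases the integral, so
`0 ≤ T s ≤ 1 / (2 s)`; this bounds `R`. Next, both `T s` and
`1 / s - T s = ∫_1^∞ (1 - {x}) x ^ (-s - 1) dx` are decreasing in `s`. The first fact bounds the
difference quotients of `R` from below by `-T s ≥ -1 / (2 s)`, the second bounds them from above by
`1 / s`, so the integral never has to be differentiated.
-/

open ZetaAsymptotics Filter Topology MeasureTheory

/-- The integral of `x ^ (-s - 1)` over `[n, n + 1]`. -/
noncomputable def powInt (n : ℕ) (s : ℝ) : ℝ := ∫ x : ℝ in n..(n + 1), 1 / x ^ (s + 1)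

lemma pow_welldef {n : ℕ} (hn : 0 < n) {s : ℝ} (hs : 0 < s) :
    IntervalIntegrable (fun x : ℝ ↦ 1 / x ^ (s + 1)) volume n (n + 1) := by
  rw [intervalIntegrable_iff_integrableOn_Icc_of_le (by linarith)]
  refine (continuousOn_of_forall_continuousAt fun x hx ↦ ContinuousAt.div ?_ ?_ ?_).integrableOn_Icc
  · fun_prop
  · apply continuousAt_id.rpow_const (Or.inr <| by linarith)
  · exact (Real.rpow_pos_of_pos ((Nat.cast_pos.mpr hn).trans_le hx.1) _).ne'

lemma powInt_eq {n : ℕ} (hn : 0 < n) {s : ℝ} (hs : 0 < s) :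
    powInt n s = (n : ℝ) ^ (-s) / s - ((n : ℝ) + 1) ^ (-s) / s := by
  have hn' : (0 : ℝ) < n := Nat.cast_pos.mpr hn
  have h0 : (0 : ℝ) ∉ Set.uIcc (n : ℝ) (n + 1) := by
    rw [Set.uIcc_of_le (by linarith)]
    exact fun h ↦ absurd h.1 (by linarith)
  have : powInt n s = ∫ x : ℝ in n..(n + 1), x ^ (-(s + 1)) := by
    refine intervalIntegral.integral_congr fun x hx ↦ ?_
    rw [Set.uIcc_of_le (by linarith)] at hx
    rw [Real.rpow_neg (by linarith [hx.1]), one_div]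
  rw [this, integral_rpow (Or.inr ⟨by linarith, h0⟩), show -(s + 1) + 1 = -s by ring]
  field_simp
  ring

lemma hasSum_powInt {s : ℝ} (hs : 0 < s) : HasSum (fun n ↦ powInt (n + 1) s) (1 / s) := by
  have hnn (n : ℕ) : 0 ≤ powInt (n + 1) s := by
    refine intervalIntegral.integral_nonneg (by simp) fun x hx ↦ ?_
    have : 0 ≤ x := (Nat.cast_nonneg _).trans hx.1
    positivity
  rw [hasSum_iff_tendsto_nat_of_nonneg hnn]
  have hP (N : ℕ) : ∑ n ∈ Finset.range N, powInt (n + 1) s = 1 / s - ((N : ℝ) + 1) ^ (-s) / s := by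
    induction N with
    | zero => simp
    | succ N ih =>
      rw [Finset.sum_range_succ, ih, powInt_eq N.succ_pos hs]
      push_cast
      ring
  simp_rw [hP]
  have := (((tendsto_rpow_neg_atTop hs).comp
    (tendsto_atTop_add_const_right _ 1 tendsto_natCast_atTop_atTop)).div_const s).const_sub (1 / s)
  simpa using this

/-- A case of Chebyshev's integral inequality: `x - n` is increasing with mean `1 / 2` on
`[n, n + 1]`, and `x ^ (-s - 1)` is decreasing. -/
lemma term_le_half {n : ℕ} (hn : 0 < n) {s : ℝ} (hs : 0 < s) : term n s ≤ powInt n s / 2 := by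
  have hn' : (0 : ℝ) < n := Nat.cast_pos.mpr hn
  -- the value of the weight at the midpoint
  set c : ℝ := 1 / ((n : ℝ) + 1 / 2) ^ (s + 1) with hc
  have hlin : ∫ x : ℝ in n..(n + 1), (x - n - 1 / 2) * c = 0 := by
    rw [intervalIntegral.integral_mul_const, intervalIntegral.integral_sub (by simp) (by simp),
      intervalIntegral.integral_sub (by simp) (by simp)]
    simp
    left
    ring
  have key : term n s ≤
      ∫ x : ℝ in n..(n + 1), (1 / x ^ (s + 1) / 2 + (x - n - 1 / 2) * c) := by
    refine intervalIntegral.integral_mono_on (by linarith) (term_welldef hn hs)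
      (((pow_welldef hn hs).div_const 2).add
        (Continuous.intervalIntegrable (by fun_prop) _ _)) fun x hx ↦ ?_
    have hx0 : 0 < x := hn'.trans_le hx.1
    have : (x - n - 1 / 2) * (1 / x ^ (s + 1) - c) ≤ 0 := by
      rcases le_total x (n + 1 / 2) with h | h
      · refine mul_nonpos_of_nonpos_of_nonneg (by linarith) (sub_nonneg.mpr ?_)
        rw [hc]
        gcongr
      · refine mul_nonpos_of_nonneg_of_nonpos (by linarith) (sub_nonpos.mpr ?_)
        rw [hc]
        gcongr
    have e : (x - n) / x ^ (s + 1) = (x - n) * (1 / x ^ (s + 1)) := by ring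
    rw [e]
    linarith
  rw [intervalIntegral.integral_add ((pow_welldef hn hs).div_const 2)
    (Continuous.intervalIntegrable (by fun_prop) _ _), hlin, intervalIntegral.integral_div] at key
  simpa [powInt] using key

lemma one_div_rpow_anti {x s t : ℝ} (hx : 1 ≤ x) (h : s ≤ t) :
    1 / x ^ (t + 1) ≤ 1 / x ^ (s + 1) := by
  have : 0 < x := by linarith
  gcongr

lemma term_anti {n : ℕ} (hn : 0 < n) {s t : ℝ} (hs : 0 < s) (h : s ≤ t) :
    term n t ≤ term n s := by
  have hn' : (1 : ℝ) ≤ n := Nat.one_le_cast.mpr hn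
  refine intervalIntegral.integral_mono_on (by linarith) (term_welldef hn (hs.trans_le h))
    (term_welldef hn hs) fun x hx ↦ ?_
  have := mul_le_mul_of_nonneg_left (one_div_rpow_anti (hn'.trans hx.1) h) (sub_nonneg.mpr hx.1)
  simpa [div_eq_mul_inv] using this

/-- The integral of `(1 - {x}) x ^ (-s - 1)` over `[n, n + 1]` decreases in `s`. -/
lemma powInt_sub_term_anti {n : ℕ} (hn : 0 < n) {s t : ℝ} (hs : 0 < s) (h : s ≤ t) :
    powInt n t - term n t ≤ powInt n s - term n s := by
  have hn' : (1 : ℝ) ≤ n := Nat.one_le_cast.mpr hn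
  have ht := hs.trans_le h
  rw [powInt, powInt, term, term,
    ← intervalIntegral.integral_sub (pow_welldef hn ht) (term_welldef hn ht),
    ← intervalIntegral.integral_sub (pow_welldef hn hs) (term_welldef hn hs)]
  refine intervalIntegral.integral_mono_on (by linarith)
    ((pow_welldef hn ht).sub (term_welldef hn ht))
    ((pow_welldef hn hs).sub (term_welldef hn hs)) fun x hx ↦ ?_
  have hx1 : 0 ≤ 1 - (x - n) := by linarith [hx.2]
  have := mul_le_mul_of_nonneg_left (one_div_rpow_anti (hn'.trans hx.1) h) hx1
  have e (r : ℝ) : 1 / x ^ (r + 1) - (x - n) / x ^ (r + 1) = (1 - (x - n)) * (1 / x ^ (r + 1)) := by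
    ring
  rw [e, e]
  exact this

lemma summable_term {s : ℝ} (hs : 0 < s) : Summable (fun n ↦ term (n + 1) s) :=
  .of_nonneg_of_le (fun _ ↦ term_nonneg _ s) (fun n ↦ term_le_half n.succ_pos hs)
    ((hasSum_powInt hs).summable.div_const 2)

lemma termTSum_nonneg (s : ℝ) : 0 ≤ termTSum s := tsum_nonneg fun n ↦ term_nonneg (n + 1) s

lemma termTSum_le {s : ℝ} (hs : 0 < s) : termTSum s ≤ 1 / s / 2 :=
  hasSum_le (fun n ↦ term_le_half n.succ_pos hs) (summable_term hs).hasSum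
    ((hasSum_powInt hs).div_const 2)

lemma termTSum_anti {s t : ℝ} (hs : 0 < s) (h : s ≤ t) : termTSum t ≤ termTSum s :=
  hasSum_le (fun n ↦ term_anti n.succ_pos hs h) (summable_term (hs.trans_le h)).hasSum
    (summable_term hs).hasSum

lemma inv_sub_termTSum_anti {s t : ℝ} (hs : 0 < s) (h : s ≤ t) :
    1 / t - termTSum t ≤ 1 / s - termTSum s :=
  hasSum_le (fun n ↦ powInt_sub_term_anti n.succ_pos hs h)
    ((hasSum_powInt (hs.trans_le h)).sub (summable_term (hs.trans_le h)).hasSum)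
    ((hasSum_powInt hs).sub (summable_term hs).hasSum)

lemma riemannZeta₀_ofReal {s : ℝ} (hs : 1 < s) :
    riemannZeta₀ s = ((1 - s * termTSum s : ℝ) : ℂ) := by
  have h1 : (s : ℂ) ≠ 1 := by exact_mod_cast hs.ne'
  rw [← zeta_limit_aux1 hs, riemannZeta₀, if_neg h1,
    zeta_eq_tsum_one_div_nat_add_one_cpow (by simpa using hs)]
  push_cast
  rw [one_div ((s : ℂ) - 1)]
  congr 1
  refine tsum_congr fun n ↦ ?_
  rw [Complex.ofReal_cpow (by positivity)]
  push_cast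
  rfl

/-- For `1 < s < t`, the difference quotient of `R` between `s` and `t` lies between
`-1 / (2 s)` and `1 / s`; letting `t` tend to `s` gives the same bounds for the derivative. -/
lemma deriv_riemannZeta₀_bounds {s : ℝ} (hs : 1 < s) :
    -(1 / s / 2) ≤ (deriv riemannZeta₀ s).re ∧ (deriv riemannZeta₀ s).re ≤ 1 / s := by
  have hd : HasDerivAt (fun x : ℝ ↦ (riemannZeta₀ x).re) (deriv riemannZeta₀ s).re s :=
    (differentiable_riemannZeta₀ (s : ℂ)).hasDerivAt.real_of_complex
  have ht := (hasDerivWithinAt_iff_tendsto_slope' Set.self_notMem_Ioi).mp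
    (hd.hasDerivWithinAt (s := Set.Ioi s))
  have hs0 : 0 < s := by linarith
  have hb (t : ℝ) (hst : s < t) :
      -(1 / s / 2) ≤ slope (fun x : ℝ ↦ (riemannZeta₀ x).re) s t ∧
        slope (fun x : ℝ ↦ (riemannZeta₀ x).re) s t ≤ 1 / s := by
    have ht0 : 0 < t := hs0.trans hst
    have hd0 : 0 < t - s := sub_pos.mpr hst
    rw [slope_def_field, riemannZeta₀_ofReal hs, riemannZeta₀_ofReal (hs.trans hst),
      Complex.ofReal_re, Complex.ofReal_re, le_div_iff₀ hd0, div_le_iff₀ hd0]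
    have hA := mul_le_mul_of_nonneg_left (termTSum_anti hs0 hst.le) ht0.le
    have hT := mul_le_mul_of_nonneg_left (termTSum_le hs0) hd0.le
    have hB := mul_le_mul_of_nonneg_left (inv_sub_termTSum_anti hs0 hst.le) hs0.le
    have hC := mul_nonneg hd0.le (termTSum_nonneg t)
    have e1 : s * (1 / s) = 1 := by field_simp
    have e2 : s * (1 / t) = 1 - (t - s) * (1 / t) := by field_simp; ring
    have e3 : (t - s) * (1 / t) ≤ (t - s) * (1 / s) := by gcongr
    constructor <;> nlinarith
  constructor
  · exact ge_of_tendsto ht (eventually_mem_nhdsWithin.mono fun t h ↦ (hb t h).1)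
  · exact le_of_tendsto ht (eventually_mem_nhdsWithin.mono fun t h ↦ (hb t h).2)

theorem zeta_logDeriv_bounds (ε : ℝ) (hε : 0 < ε) :
    -1 / ε + 1 / (2 * (1 + ε) ^ 2)
        < ((deriv riemannZeta (1 + ε)) / riemannZeta (1 + ε)).re ∧
      ((deriv riemannZeta (1 + ε)) / riemannZeta (1 + ε)).re
        < -1 / ε + 2 - 1 / (1 + ε) := by
  have hs : 1 < 1 + ε := by linarith
  have hs0 : 0 < 1 + ε := by linarith
  have h1 : ((1 + ε : ℝ) : ℂ) ≠ 1 := by exact_mod_cast hs.ne'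
  have hcast : (1 + ε : ℂ) = ((1 + ε : ℝ) : ℂ) := by push_cast; rfl
  obtain ⟨hD1, hD2⟩ := deriv_riemannZeta₀_bounds hs
  have hR := riemannZeta₀_ofReal hs
  have hT0 := mul_nonneg hs0.le (termTSum_nonneg (1 + ε))
  have hT1 := mul_le_mul_of_nonneg_left (termTSum_le hs0) hs0.le
  have e1 : (1 + ε) * (1 / (1 + ε) / 2) = 1 / 2 := by field_simp
  rw [e1] at hT1
  set R : ℝ := 1 - (1 + ε) * termTSum (1 + ε)
  set D : ℝ := (deriv riemannZeta₀ ((1 + ε : ℝ) : ℂ)).re with hD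
  have hRlo : 1 / 2 ≤ R := by linarith
  have hRhi : R ≤ 1 := by linarith
  have hz : riemannZeta ((1 + ε : ℝ) : ℂ) = ((ε⁻¹ + R : ℝ) : ℂ) := by
    rw [riemannZeta_eq_inv_sub_add h1, hR]
    push_cast
    ring
  have hdz : (deriv riemannZeta ((1 + ε : ℝ) : ℂ)).re = -(ε⁻¹) ^ 2 + D := by
    rw [deriv_riemannZeta_eq_neg_inv_sub_sq_add h1, Complex.add_re, ← hD]
    congr 1
    rw [show (-(((1 + ε : ℝ) : ℂ) - 1)⁻¹ ^ 2) = ((-(ε⁻¹) ^ 2 : ℝ) : ℂ) by push_cast; ring,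
      Complex.ofReal_re]
  have hF : 0 < 1 + ε * R := by positivity
  -- the logarithmic derivative of `(s - 1) ζ s = 1 + ε R` appears after removing the pole
  have hq : (deriv riemannZeta ((1 + ε : ℝ) : ℂ) / riemannZeta ((1 + ε : ℝ) : ℂ)).re =
      -1 / ε + (R + ε * D) / (1 + ε * R) := by
    rw [hz, Complex.div_ofReal_re, hdz]
    have : ε⁻¹ + R = (1 + ε * R) / ε := by field_simp
    rw [this]
    field_simp
    ring
  rw [hcast, hq]
  have hεD1 := mul_le_mul_of_nonneg_left hD1 hε.le
  have hεD2 := mul_le_mul_of_nonneg_left hD2 hε.le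
  have hi : 0 < 1 / (1 + ε) := by positivity
  have hi1 : ε * (1 / (1 + ε)) = 1 - 1 / (1 + ε) := by field_simp; ring
  have hi2 : 1 / (2 * (1 + ε) ^ 2) = (1 / (1 + ε)) ^ 2 / 2 := by field_simp
  have hlt : 1 / (1 + ε) < 1 := by rw [div_lt_one hs0]; exact hs
  rw [hi2]
  generalize 1 / (1 + ε) = u at *
  constructor
  · have : u ^ 2 / 2 < (R + ε * D) / (1 + ε * R) := by
      rw [lt_div_iff₀ hF]
      have e2 : u ^ 2 / 2 * (1 + ε * R) = u ^ 2 / 2 + u * (1 - u) / 2 * R := by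
        linear_combination (u / 2 * R) * hi1
      rw [e2]
      -- the difference is affine in `R` with positive slope, so `R = 1 / 2` is the worst case
      have h3 : 0 ≤ (R - 1 / 2) * (1 - u * (1 - u) / 2) :=
        mul_nonneg (by linarith) (by nlinarith)
      nlinarith
    linarith
  · have : (R + ε * D) / (1 + ε * R) < 2 - u := by
      rw [div_lt_iff₀ hF]
      have h3 : 0 < ε * R * (2 - u) := by
        have : 0 < 2 - u := by linarith
        positivity
      nlinarith
    linarith
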